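/- Fix a, b ∈ ℝ^d and cluster sizes s ∈ {2, …, n} and t ∈ {1, …, n}, and let x be a d-dimensional Gaussian random vector with arbitrary mean and standard deviation σ ≤ 1. Define Δ_x(a, b) = (s/(s−1))‖x − a‖² − (t/(t+1))‖x − b‖². Then there is an absolute constant c > 0 such that for every interval I of length ε ≤ 1, the probability that Δ_x(a, b) ∈ I is at most c · (n/d^{1/4}) · √(ε/σ²). -/

import Mathlib

open MeasureTheory ProbabilityTheory

/-- A `d`-dimensional Gaussian random vector with mean `μ` and standard deviation `σ`,
realized as the product of `d` independent one-dimensional Gaussians. -/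
noncomputable def gaussianVec (d : ℕ) (μ : Fin d → ℝ) (σ : ℝ) : Measure (Fin d → ℝ) :=
  Measure.pi fun j => gaussianReal (μ j) ((σ ^ 2).toNNReal)

/-- The identification of `Fin d → ℝ` with `EuclideanSpace ℝ (Fin d)`. -/
noncomputable def toEuc {d : ℕ} (x : Fin d → ℝ) : EuclideanSpace ℝ (Fin d) :=
  (WithLp.equiv 2 (Fin d → ℝ)).symm x

/-- The gain `Δ_x(a, b) = (s/(s−1))·‖x − a‖² − (t/(t+1))·‖x − b‖²` of the Hartigan--Wong
method when moving `x` from a cluster of size `s` with center `a` to a cluster of size `t`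
with center `b`. -/
noncomputable def gainFixedCenters {d : ℕ} (s t : ℕ) (x a b : EuclideanSpace ℝ (Fin d)) : ℝ :=
  (s : ℝ) / ((s : ℝ) - 1) * ‖x - a‖ ^ 2 - (t : ℝ) / ((t : ℝ) + 1) * ‖x - b‖ ^ 2

/-!
Completing the square in `x` turns the gain into an affine function, with slope
`s / (s - 1) - t / (t + 1) ≥ 1 / s`, of the squared distance from `x` to a single point, which is a
scaled noncentral chi-squared variable. The characteristic function of the latter at `w` is a
product of `d` factors of modulus at most `(1 + 4 σ ^ 4 w ^ 2) ^ (-1 / 4)`; by Bernoulli's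
inequality it is at most `(d σ ^ 4) ^ (-1 / 4) * |w| ^ (-1 / 2)`. Averaging the characteristic
function against a Gaussian (Esseen's inequality) turns a decay `M * |w| ^ (-α)`, `0 ≤ α < 1`, into
a bound of order `M * δ ^ α` for the mass of an interval of length `δ`.
-/

lemma integral_charFun_comm {E : Type*} [NormedAddCommGroup E] [InnerProductSpace ℝ E]
    [MeasurableSpace E] [OpensMeasurableSpace E] [SecondCountableTopology E]
    (μ ν : Measure E) [IsFiniteMeasure μ] [IsFiniteMeasure ν] :
    ∫ t, charFun μ t ∂ν = ∫ x, charFun ν x ∂μ := by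
  simp_rw [charFun_apply]
  rw [integral_integral_swap]
  · simp_rw [real_inner_comm]
  · refine Integrable.of_bound (C := 1) ?_ (ae_of_all _ fun p ↦ ?_)
    · exact Measurable.aestronglyMeasurable (by simp only [Function.uncurry_def]; fun_prop)
    · exact (Complex.norm_exp_ofReal_mul_I _).le

section SmallBall

open Metric

lemma measureReal_closedBall_zero_one_le_integral_norm_charFun (μ : Measure ℝ)
    [IsFiniteMeasure μ] :
    μ.real (closedBall 0 1) ≤ Real.exp (1 / 2) * ∫ u, ‖charFun μ u‖ ∂gaussianReal 0 1 := by
  set g : ℝ → ℝ := fun x ↦ Real.exp (-x ^ 2 / 2) with hg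
  have charFun_gaussian (x : ℝ) : charFun (gaussianReal 0 1) x = g x := by
    simp [charFun_gaussianReal, hg, neg_div]
  have g_nonneg (x : ℝ) : 0 ≤ g x := (Real.exp_pos _).le
  have g_integrable : Integrable g μ := by
    refine Integrable.of_bound (by fun_prop) 1 (ae_of_all _ fun x ↦ ?_)
    rw [Real.norm_of_nonneg (g_nonneg x), Real.exp_le_one_iff]
    linarith [sq_nonneg x]
  have markov : Real.exp (-(1 / 2)) * μ.real (closedBall 0 1) ≤ ∫ x, g x ∂μ := by
    refine le_trans ?_ (mul_meas_ge_le_integral_of_nonneg (ae_of_all _ g_nonneg) g_integrable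
      (Real.exp (-(1 / 2))))
    gcongr ?_ * ?_
    refine measureReal_mono fun x hx ↦ ?_
    have : x ^ 2 ≤ 1 := (sq_le_one_iff_abs_le_one x).mpr (by simpa using hx)
    simp only [Set.mem_ofPred_eq, hg, Real.exp_le_exp]
    linarith
  calc μ.real (closedBall 0 1)
      = Real.exp (1 / 2) * (Real.exp (-(1 / 2)) * μ.real (closedBall 0 1)) := by
        rw [← mul_assoc, ← Real.exp_add, add_neg_cancel, Real.exp_zero, one_mul]
    _ ≤ Real.exp (1 / 2) * ∫ x, g x ∂μ := by gcongr
    _ = Real.exp (1 / 2) * ‖∫ u, charFun μ u ∂gaussianReal 0 1‖ := by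
        simp_rw [integral_charFun_comm, charFun_gaussian, integral_complex_ofReal,
          Complex.norm_real, Real.norm_of_nonneg (integral_nonneg g_nonneg)]
    _ ≤ Real.exp (1 / 2) * ∫ u, ‖charFun μ u‖ ∂gaussianReal 0 1 := by
        gcongr
        exact norm_integral_le_integral_norm _

lemma measureReal_closedBall_le_integral_norm_charFun (μ : Measure ℝ) [IsFiniteMeasure μ]
    (r : ℝ) {δ : ℝ} (hδ : 0 < δ) :
    μ.real (closedBall r δ) ≤
      Real.exp (1 / 2) * ∫ u, ‖charFun μ (δ⁻¹ * u)‖ ∂gaussianReal 0 1 := by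
  set ν := (μ.map (· + -r)).map (δ⁻¹ * ·) with hν
  have ball_preimage : (· + -r) ⁻¹' ((δ⁻¹ * ·) ⁻¹' closedBall 0 1) = closedBall r δ := by
    ext x
    simp [Real.dist_eq, abs_of_pos hδ, inv_mul_le_one₀ hδ, sub_eq_add_neg]
  have ball : ν.real (closedBall 0 1) = μ.real (closedBall r δ) := by
    rw [hν, map_measureReal_apply (by fun_prop) measurableSet_closedBall,
      map_measureReal_apply (by fun_prop) (by measurability), ball_preimage]
  have charFun_norm (u : ℝ) : ‖charFun ν u‖ = ‖charFun μ (δ⁻¹ * u)‖ := by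
    simp only [hν, charFun_map_mul, charFun_map_add_const, norm_mul]
    rw [Complex.norm_exp_ofReal_mul_I, mul_one]
  simpa only [ball, charFun_norm] using measureReal_closedBall_zero_one_le_integral_norm_charFun ν

lemma integrable_abs_rpow_gaussianReal {p : ℝ} (hp : -1 < p) {v : NNReal} (hv : v ≠ 0) :
    Integrable (fun x : ℝ ↦ |x| ^ p) (gaussianReal 0 v) := by
  have h_lebesgue : Integrable fun x : ℝ ↦ |x| ^ p * Real.exp (-(2 * (v : ℝ))⁻¹ * |x| ^ 2) := by
    have := integrable_fun_norm_addHaar (volume : Measure ℝ)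
      (f := fun x ↦ x ^ p * Real.exp (-(2 * (v : ℝ))⁻¹ * x ^ 2))
    refine this.mpr ?_
    simpa using integrableOn_rpow_mul_exp_neg_mul_sq (b := (2 * (v : ℝ))⁻¹) (by positivity) hp
  rw [gaussianReal_of_var_ne_zero 0 hv,
    integrable_withDensity_iff_integrable_smul' (measurable_gaussianPDF _ _)
      (ae_of_all _ fun _ ↦ gaussianPDF_lt_top)]
  refine (h_lebesgue.const_mul (√(2 * Real.pi * v))⁻¹).congr (ae_of_all _ fun x ↦ ?_)
  simp only [toReal_gaussianPDF, gaussianPDFReal, smul_eq_mul, sq_abs, sub_zero]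
  rw [show -x ^ 2 / (2 * (v : ℝ)) = -(2 * (v : ℝ))⁻¹ * x ^ 2 by ring]
  ring

lemma measureReal_closedBall_le_of_norm_charFun_le {μ : Measure ℝ} [IsFiniteMeasure μ] {α M : ℝ}
    (hα : α < 1) (hM : ∀ w ≠ 0, ‖charFun μ w‖ ≤ M * |w| ^ (-α)) (r : ℝ) {δ : ℝ} (hδ : 0 < δ) :
    μ.real (closedBall r δ) ≤
      Real.exp (1 / 2) * (∫ u, |u| ^ (-α) ∂gaussianReal 0 1) * (M * δ ^ α) := by
  have decay : ∀ᵐ u ∂gaussianReal 0 1, ‖charFun μ (δ⁻¹ * u)‖ ≤ M * δ ^ α * |u| ^ (-α) := by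
    have := nullSingletonClass_gaussianReal (μ := 0) one_ne_zero
    filter_upwards [Measure.ae_ne (gaussianReal 0 1) 0] with u hu
    refine (hM _ (mul_ne_zero (inv_ne_zero hδ.ne') hu)).trans_eq ?_
    rw [abs_mul, abs_of_pos (inv_pos.mpr hδ), Real.mul_rpow (by positivity) (abs_nonneg u),
      Real.inv_rpow hδ.le, Real.rpow_neg hδ.le, inv_inv, mul_assoc]
  have integral_le : ∫ u, ‖charFun μ (δ⁻¹ * u)‖ ∂gaussianReal 0 1 ≤
      ∫ u, M * δ ^ α * |u| ^ (-α) ∂gaussianReal 0 1 :=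
    integral_mono_of_nonneg (ae_of_all _ fun u ↦ norm_nonneg _)
      ((integrable_abs_rpow_gaussianReal (by linarith) one_ne_zero).const_mul _) decay
  calc μ.real (closedBall r δ)
      ≤ Real.exp (1 / 2) * ∫ u, ‖charFun μ (δ⁻¹ * u)‖ ∂gaussianReal 0 1 :=
        measureReal_closedBall_le_integral_norm_charFun μ r hδ
    _ ≤ Real.exp (1 / 2) * ∫ u, M * δ ^ α * |u| ^ (-α) ∂gaussianReal 0 1 := by gcongr
    _ = Real.exp (1 / 2) * (∫ u, |u| ^ (-α) ∂gaussianReal 0 1) * (M * δ ^ α) := by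
        rw [integral_const_mul]
        ring

lemma exists_measureReal_closedBall_le_of_norm_charFun_le {α : ℝ} (hα₀ : 0 ≤ α) (hα₁ : α < 1) :
    ∃ C : ℝ, 0 < C ∧ ∀ (μ : Measure ℝ) [IsFiniteMeasure μ] (M : ℝ),
      (∀ w ≠ 0, ‖charFun μ w‖ ≤ M * |w| ^ (-α)) →
        ∀ r δ : ℝ, 0 ≤ δ → μ.real (closedBall r δ) ≤ C * (M * δ ^ α) := by
  set K : ℝ := Real.exp (1 / 2) * ∫ u, |u| ^ (-α) ∂gaussianReal 0 1
  have hK : 0 ≤ K := mul_nonneg (Real.exp_pos _).le (integral_nonneg fun u ↦ by positivity)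
  refine ⟨K + 1, add_pos_of_nonneg_of_pos hK one_pos, fun μ _ M hM r δ hδ ↦ ?_⟩
  have hM₀ : 0 ≤ M := by simpa using (norm_nonneg _).trans (hM 1 one_ne_zero)
  -- The bound is proved at radii `η > δ` and passed to the limit, which covers `δ = 0`.
  have bound_continuous : Continuous fun η : ℝ ↦ (K + 1) * (M * η ^ α) :=
    continuous_const.mul (continuous_const.mul (Real.continuous_rpow_const hα₀))
  refine ge_of_tendsto (bound_continuous.continuousWithinAt (s := Set.Ioi δ)) ?_
  filter_upwards [self_mem_nhdsWithin] with η (hη : δ < η)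
  have hη₀ : 0 < η := hδ.trans_lt hη
  calc μ.real (closedBall r δ)
      ≤ μ.real (closedBall r η) := measureReal_mono (closedBall_subset_closedBall hη.le)
    _ ≤ K * (M * η ^ α) := measureReal_closedBall_le_of_norm_charFun_le hα₁ hM r hη₀
    _ ≤ (K + 1) * (M * η ^ α) := by gcongr; linarith

end SmallBall

section SquaredGaussian

lemma ofReal_mul_cpow {r : ℝ} (hr : 0 ≤ r) (z p : ℂ) : (r * z) ^ p = (r : ℂ) ^ p * z ^ p := by
  rcases eq_or_ne p 0 with rfl | hp
  · simp
  rcases hr.eq_or_lt with rfl | hr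
  · simp [hp]
  rcases eq_or_ne z 0 with rfl | hz
  · simp [hp]
  have hr' : (r : ℂ) ≠ 0 := Complex.ofReal_ne_zero.mpr hr.ne'
  rw [Complex.cpow_def_of_ne_zero (mul_ne_zero hr' hz), Complex.cpow_def_of_ne_zero hr',
    Complex.cpow_def_of_ne_zero hz, Complex.log_ofReal_mul hr hz, Complex.ofReal_log hr.le,
    add_mul, Complex.exp_add]

lemma ofReal_cpow_one_half {x : ℝ} (hx : 0 ≤ x) : (x : ℂ) ^ (1 / 2 : ℂ) = (√x : ℝ) := by
  rw [Real.sqrt_eq_rpow, Complex.ofReal_cpow hx]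
  norm_num

lemma one_sub_two_mul_mul_I_ne_zero (v w : ℝ) : (1 - 2 * v * w * Complex.I : ℂ) ≠ 0 := fun h ↦ by
  simpa using congrArg Complex.re h

lemma gaussianPDFReal_smul_cexp_mul_sq (m : ℝ) {v : NNReal} (hv : v ≠ 0) (w x : ℝ) :
    gaussianPDFReal m v x • Complex.exp (w * ((x ^ 2 : ℝ) : ℂ) * Complex.I) =
      ((√(2 * Real.pi * v) : ℝ) : ℂ)⁻¹ *
        Complex.exp (-(1 - 2 * v * w * Complex.I) / (2 * v) * x ^ 2 + m / v * x +
          -m ^ 2 / (2 * v)) := by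
  have hvc : (v : ℂ) ≠ 0 := by exact_mod_cast hv
  rw [gaussianPDFReal, Complex.real_smul, Complex.ofReal_mul, mul_assoc, Complex.ofReal_exp,
    ← Complex.exp_add, Complex.ofReal_inv]
  congr 2
  push_cast
  field

lemma charFun_map_sq_gaussianReal (m : ℝ) (v : NNReal) (w : ℝ) :
    charFun ((gaussianReal m v).map (· ^ 2)) w =
      (1 - 2 * v * w * Complex.I)⁻¹ ^ (1 / 2 : ℂ) *
        Complex.exp (m ^ 2 * w * Complex.I / (1 - 2 * v * w * Complex.I)) := by
  rw [charFun_apply_real, integral_map (by fun_prop) (by fun_prop)]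
  rcases eq_or_ne v 0 with rfl | hv
  · simp [mul_comm]
  have hv₀ : (0 : ℝ) < v := by positivity
  have hvc : (v : ℂ) ≠ 0 := by exact_mod_cast hv
  set q : ℂ := 1 - 2 * v * w * Complex.I with hq
  have hq₀ : q ≠ 0 := one_sub_two_mul_mul_I_ne_zero v w
  have re_neg : (-q / (2 * v)).re < 0 := by
    have : -q / (2 * v) = ((-(2 * v)⁻¹ : ℝ) : ℂ) * q := by push_cast; field
    rw [this, Complex.re_ofReal_mul, hq]
    simpa using hv₀
  have base : (Real.pi : ℂ) / -(-q / (2 * v)) = ((2 * Real.pi * v : ℝ) : ℂ) * q⁻¹ := by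
    push_cast
    field
  have exponent : -(m : ℂ) ^ 2 / (2 * v) - (m / v) ^ 2 / (4 * (-q / (2 * v))) =
      m ^ 2 * w * Complex.I / q := by
    field_simp
    rw [hq]
    ring
  have hroot : ((√(2 * Real.pi * v) : ℝ) : ℂ) ≠ 0 :=
    Complex.ofReal_ne_zero.mpr (by positivity)
  simp_rw [integral_gaussianReal_eq_integral_smul hv, gaussianPDFReal_smul_cexp_mul_sq m hv w,
    ← hq]
  rw [integral_const_mul, integral_cexp_quadratic re_neg, base, exponent,
    ofReal_mul_cpow (by positivity), ofReal_cpow_one_half (by positivity), ← mul_assoc,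
    inv_mul_cancel_left₀ hroot]

lemma norm_charFun_map_sq_gaussianReal_le (m : ℝ) (v : NNReal) (w : ℝ) :
    ‖charFun ((gaussianReal m v).map (· ^ 2)) w‖ ≤
      (1 + 4 * (v : ℝ) ^ 2 * w ^ 2) ^ (-(1 / 4) : ℝ) := by
  set q : ℂ := 1 - 2 * v * w * Complex.I with hq
  have q_re : q.re = 1 := by simp [hq]
  have q_im : q.im = -(2 * v * w) := by simp [hq]
  have normSq_q : Complex.normSq q = 1 + 4 * (v : ℝ) ^ 2 * w ^ 2 := by
    rw [Complex.normSq_apply, q_re, q_im]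
    ring
  have exponent_re : (m ^ 2 * w * Complex.I / q).re ≤ 0 := by
    have : (m ^ 2 * w * Complex.I / q).re = -(2 * v * (m * w) ^ 2) / Complex.normSq q := by
      rw [Complex.div_re, q_re, q_im]
      simp only [← Complex.ofReal_pow, Complex.mul_re, Complex.ofReal_re, Complex.ofReal_im,
        mul_zero, sub_zero, Complex.I_re, Complex.mul_im, zero_mul, add_zero, Complex.I_im, mul_one,
        sub_self, zero_div, mul_neg, zero_add]
      ring
    rw [this]
    exact div_nonpos_of_nonpos_of_nonneg (neg_nonpos.mpr (by positivity)) (Complex.normSq_nonneg q)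
  have norm_root : ‖q⁻¹ ^ (1 / 2 : ℂ)‖ = (1 + 4 * (v : ℝ) ^ 2 * w ^ 2) ^ (-(1 / 4) : ℝ) := by
    rw [show (1 / 2 : ℂ) = ((1 / 2 : ℝ) : ℂ) by push_cast; rfl, Complex.norm_cpow_real, norm_inv,
      ← normSq_q, Complex.normSq_eq_norm_sq, Real.inv_rpow (norm_nonneg q),
      ← Real.rpow_neg (norm_nonneg q), ← Real.rpow_natCast_mul (norm_nonneg q)]
    norm_num
  rw [charFun_map_sq_gaussianReal, norm_mul, norm_root, Complex.norm_exp]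
  exact mul_le_of_le_one_right (by positivity) (Real.exp_le_one_iff.mpr exponent_re)

variable {ι : Type*} [Fintype ι] (m z : ι → ℝ)

lemma norm_charFun_map_sum_sq_sub_pi_gaussianReal_le (v : ι → NNReal) (w : ℝ) :
    ‖charFun ((Measure.pi fun i ↦ gaussianReal (m i) (v i)).map
        fun x ↦ ∑ i, (x i - z i) ^ 2) w‖ ≤
      ∏ i, (1 + 4 * (v i : ℝ) ^ 2 * w ^ 2) ^ (-(1 / 4) : ℝ) := by
  have indep := iIndepFun_pi (μ := fun i ↦ gaussianReal (m i) (v i))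
    (X := fun i y ↦ (y - z i) ^ 2) (by fun_prop)
  have map_coordinate (i : ι) :
      (Measure.pi fun i ↦ gaussianReal (m i) (v i)).map (fun x ↦ (x i - z i) ^ 2) =
        (gaussianReal (m i - z i) (v i)).map (· ^ 2) := by
    rw [← gaussianReal_map_sub_const, Measure.map_map (by fun_prop) (by fun_prop),
      ← (measurePreserving_eval (fun i ↦ gaussianReal (m i) (v i)) i).map_eq,
      Measure.map_map (by fun_prop) (by fun_prop)]
    rfl
  rw [indep.charFun_map_fun_sum_eq_prod
    fun i ↦ Measurable.aemeasurable (by fun_prop), Finset.prod_apply, norm_prod]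
  gcongr with i
  rw [map_coordinate]
  exact norm_charFun_map_sq_gaussianReal_le _ _ _

lemma norm_charFun_map_sum_sq_sub_pi_gaussianReal_le_abs_rpow [Nonempty ι] {v : NNReal}
    (hv : v ≠ 0) {w : ℝ} (hw : w ≠ 0) :
    ‖charFun ((Measure.pi fun i ↦ gaussianReal (m i) v).map fun x ↦ ∑ i, (x i - z i) ^ 2) w‖ ≤
      (Fintype.card ι * (v : ℝ) ^ 2) ^ (-(1 / 4) : ℝ) * |w| ^ (-(1 / 2) : ℝ) := by
  set d := Fintype.card ι
  have bernoulli : d * (v : ℝ) ^ 2 * |w| ^ 2 ≤ (1 + 4 * (v : ℝ) ^ 2 * w ^ 2) ^ d := by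
    have h_nonneg : 0 ≤ (v : ℝ) ^ 2 * w ^ 2 := by positivity
    calc d * (v : ℝ) ^ 2 * |w| ^ 2
        = d * ((v : ℝ) ^ 2 * w ^ 2) := by rw [sq_abs, mul_assoc]
      _ ≤ 1 + d * (4 * (v : ℝ) ^ 2 * w ^ 2) := by
          linarith [mul_nonneg d.cast_nonneg h_nonneg]
      _ ≤ (1 + 4 * (v : ℝ) ^ 2 * w ^ 2) ^ d := one_add_mul_le_pow (by linarith) d
  calc _ ≤ ∏ _i : ι, (1 + 4 * (v : ℝ) ^ 2 * w ^ 2) ^ (-(1 / 4) : ℝ) :=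
        norm_charFun_map_sum_sq_sub_pi_gaussianReal_le m z (fun _ ↦ v) w
    _ = ((1 + 4 * (v : ℝ) ^ 2 * w ^ 2) ^ d) ^ (-(1 / 4) : ℝ) := by
        rw [Finset.prod_const, Finset.card_univ, Real.rpow_pow_comm (by positivity)]
    _ ≤ (d * (v : ℝ) ^ 2 * |w| ^ 2) ^ (-(1 / 4) : ℝ) :=
        Real.rpow_le_rpow_of_nonpos (by positivity) bernoulli (by norm_num)
    _ = (d * (v : ℝ) ^ 2) ^ (-(1 / 4) : ℝ) * |w| ^ (-(1 / 2) : ℝ) := by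
        rw [Real.mul_rpow (by positivity) (by positivity), ← Real.rpow_natCast_mul (abs_nonneg w)]
        norm_num

end SquaredGaussian

lemma mul_norm_sub_sq_sub_mul_norm_sub_sq {E : Type*} [NormedAddCommGroup E]
    [InnerProductSpace ℝ E] {A B : ℝ} (hAB : A ≠ B) (x a b : E) :
    A * ‖x - a‖ ^ 2 - B * ‖x - b‖ ^ 2 =
      (A - B) * ‖x - (A - B)⁻¹ • (A • a - B • b)‖ ^ 2 - A * B / (A - B) * ‖a - b‖ ^ 2 := by
  have hAB' : A - B ≠ 0 := sub_ne_zero.mpr hAB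
  simp only [norm_sub_sq_real, norm_smul, inner_sub_right, real_inner_smul_left,
    real_inner_smul_right, mul_pow, Real.norm_eq_abs, sq_abs]
  field

lemma inv_le_div_sub_one_sub_div_add_one {s t : ℝ} (hs : 1 < s) (ht : 0 ≤ t) :
    s⁻¹ ≤ s / (s - 1) - t / (t + 1) := by
  have hs' : 0 < s - 1 := sub_pos.mpr hs
  calc s⁻¹ ≤ (s - 1)⁻¹ := by gcongr; linarith
    _ ≤ (s - 1)⁻¹ + (t + 1)⁻¹ := le_add_of_nonneg_right (by positivity)
    _ = s / (s - 1) - t / (t + 1) := by field_simp; ring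

section GaussianVec

open Metric

instance isProbabilityMeasure_gaussianVec (d : ℕ) (μ : Fin d → ℝ) (σ : ℝ) :
    IsProbabilityMeasure (gaussianVec d μ σ) := by
  unfold gaussianVec
  infer_instance

lemma norm_toEuc_sub_sq {d : ℕ} (x : Fin d → ℝ) (z : EuclideanSpace ℝ (Fin d)) :
    ‖toEuc x - z‖ ^ 2 = ∑ i, (x i - z i) ^ 2 :=
  EuclideanSpace.real_norm_sq_eq _

lemma exists_gaussianVec_norm_sub_sq_mem_closedBall_le :
    ∃ C : ℝ, 0 < C ∧ ∀ d : ℕ, 0 < d →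
      ∀ (μ : Fin d → ℝ) (σ : ℝ), 0 < σ → ∀ (z : EuclideanSpace ℝ (Fin d)) (r δ : ℝ), 0 ≤ δ →
        (gaussianVec d μ σ).real {x | ‖toEuc x - z‖ ^ 2 ∈ closedBall r δ} ≤
          C * (√(δ / σ ^ 2) / (d : ℝ) ^ (1 / 4 : ℝ)) := by
  obtain ⟨C, hC, small_ball⟩ :=
    exists_measureReal_closedBall_le_of_norm_charFun_le (α := 1 / 2) (by norm_num) (by norm_num)
  refine ⟨C, hC, fun d hd μ σ hσ z r δ hδ ↦ ?_⟩
  have : NeZero d := ⟨hd.ne'⟩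
  have hv : (σ ^ 2).toNNReal ≠ 0 := (Real.toNNReal_pos.mpr (by positivity)).ne'
  have decay (w : ℝ) (hw : w ≠ 0) :
      ‖charFun ((gaussianVec d μ σ).map fun x ↦ ∑ i, (x i - z i) ^ 2) w‖ ≤
        (d * (σ ^ 2) ^ 2) ^ (-(1 / 4) : ℝ) * |w| ^ (-(1 / 2) : ℝ) := by
    simpa [gaussianVec, Real.coe_toNNReal _ (sq_nonneg σ)] using
      norm_charFun_map_sum_sq_sub_pi_gaussianReal_le_abs_rpow μ z hv hw
  have law := small_ball _ _ decay r δ hδ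
  rw [map_measureReal_apply (by fun_prop) measurableSet_closedBall] at law
  have rate : (d * (σ ^ 2) ^ 2) ^ (-(1 / 4) : ℝ) * δ ^ (1 / 2 : ℝ) =
      √(δ / σ ^ 2) / (d : ℝ) ^ (1 / 4 : ℝ) := by
    have hσ₄ : ((σ ^ 2) ^ 2) ^ (1 / 4 : ℝ) = σ := by
      rw [← pow_mul, ← Real.rpow_natCast_mul hσ.le]
      norm_num
    rw [Real.rpow_neg (by positivity), Real.mul_rpow (by positivity) (by positivity), hσ₄,
      ← Real.sqrt_eq_rpow, Real.sqrt_div hδ, Real.sqrt_sq hσ.le]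
    field
  simp_rw [norm_toEuc_sub_sq]
  exact law.trans_eq (by rw [rate])

lemma exists_gaussianVec_mul_norm_sub_sq_sub_mem_closedBall_le :
    ∃ C : ℝ, 0 < C ∧ ∀ d : ℕ, 0 < d →
      ∀ (μ : Fin d → ℝ) (σ : ℝ), 0 < σ →
        ∀ (A B : ℝ), B < A → ∀ (a b : EuclideanSpace ℝ (Fin d)) (r δ : ℝ), 0 ≤ δ →
          (gaussianVec d μ σ).real
              {x | A * ‖toEuc x - a‖ ^ 2 - B * ‖toEuc x - b‖ ^ 2 ∈ closedBall r δ} ≤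
            C * (√(δ / (A - B) / σ ^ 2) / (d : ℝ) ^ (1 / 4 : ℝ)) := by
  obtain ⟨C, hC, small_ball⟩ := exists_gaussianVec_norm_sub_sq_mem_closedBall_le
  refine ⟨C, hC, fun d hd μ σ hσ A B hBA a b r δ hδ ↦ ?_⟩
  have hAB : 0 < A - B := sub_pos.mpr hBA
  set z := (A - B)⁻¹ • (A • a - B • b)
  set k := A * B / (A - B) * ‖a - b‖ ^ 2
  refine le_trans (measureReal_mono fun x hx ↦ ?_)
    (small_ball d hd μ σ hσ z ((r + k) / (A - B)) (δ / (A - B)) (div_nonneg hδ hAB.le))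
  simp only [Set.mem_ofPred_eq, mem_closedBall, Real.dist_eq,
    mul_norm_sub_sq_sub_mul_norm_sub_sq hBA.ne'] at hx ⊢
  have rescale : ‖toEuc x - z‖ ^ 2 - (r + k) / (A - B) =
      ((A - B) * ‖toEuc x - z‖ ^ 2 - k - r) / (A - B) := by
    field
  rw [rescale, abs_div, abs_of_pos hAB]
  gcongr

end GaussianVec

theorem gain_fixed_centers_interval_general :
    ∃ c : ℝ, 0 < c ∧
      ∀ d : ℕ, 0 < d →
        ∀ s t : ℕ, 2 ≤ s →
          ∀ (a b : EuclideanSpace ℝ (Fin d)) (μ : Fin d → ℝ) (σ : ℝ), 0 < σ →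
            ∀ ε : ℝ, 0 ≤ ε →
              ∀ r : ℝ,
                gaussianVec d μ σ
                    {x : Fin d → ℝ | gainFixedCenters s t (toEuc x) a b ∈ Set.Icc r (r + ε)}
                  ≤ ENNReal.ofReal
                      (c * (√s / (d : ℝ) ^ ((1 : ℝ) / 4)) * √(ε / σ ^ 2)) := by
  obtain ⟨c, hc, small_ball⟩ := exists_gaussianVec_mul_norm_sub_sq_sub_mem_closedBall_le
  refine ⟨c, hc, fun d hd s t hs a b μ σ hσ ε hε r ↦ ?_⟩
  set A : ℝ := s / (s - 1)
  set B : ℝ := t / (t + 1)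
  have hs₀ : (0 : ℝ) < s := by positivity
  have gap : (s : ℝ)⁻¹ ≤ A - B :=
    inv_le_div_sub_one_sub_div_add_one (by exact_mod_cast hs) t.cast_nonneg
  have hBA : B < A := sub_pos.mp ((inv_pos.mpr hs₀).trans_le gap)
  have Icc_subset : Set.Icc r (r + ε) ⊆ Metric.closedBall r ε := by
    rw [Real.closedBall_eq_Icc]
    exact Set.Icc_subset_Icc_left (by linarith)
  have sqrt_le : √(ε / (A - B) / σ ^ 2) ≤ √s * √(ε / σ ^ 2) := by
    rw [← Real.sqrt_mul hs₀.le, div_right_comm, div_eq_mul_inv _ (A - B), mul_comm]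
    gcongr
    exact inv_le_of_inv_le₀ hs₀ gap
  rw [← ofReal_measureReal]
  gcongr
  calc (gaussianVec d μ σ).real {x | gainFixedCenters s t (toEuc x) a b ∈ Set.Icc r (r + ε)}
      ≤ (gaussianVec d μ σ).real
          {x | gainFixedCenters s t (toEuc x) a b ∈ Metric.closedBall r ε} :=
        measureReal_mono fun _ hx ↦ Icc_subset hx
    _ ≤ c * (√(ε / (A - B) / σ ^ 2) / (d : ℝ) ^ (1 / 4 : ℝ)) :=
        small_ball d hd μ σ hσ A B hBA a b r ε hε
    _ ≤ c * (√s * √(ε / σ ^ 2) / (d : ℝ) ^ (1 / 4 : ℝ)) := by gcongr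
    _ = c * (√s / (d : ℝ) ^ (1 / 4 : ℝ)) * √(ε / σ ^ 2) := by ring

/-- Fix centers `a, b ∈ ℝ^d` and cluster sizes `s ∈ {2, …, n}`,
`t ∈ {1, …, n}`, and let `x` be a `d`-dimensional Gaussian random vector with arbitrary mean
and standard deviation `σ ≤ 1`. There is an absolute constant `c > 0` such that for every
interval `I` of length `ε ≤ 1`, `ℙ(Δ_x(a, b) ∈ I) ≤ c·(n/d^{1/4})·√(ε/σ²)`. -/
theorem gain_fixed_centers_interval :
    ∃ c : ℝ, 0 < c ∧
      ∀ (n d : ℕ), 0 < d →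
        ∀ (s t : ℕ), 2 ≤ s → s ≤ n → 1 ≤ t → t ≤ n →
          ∀ (a b : EuclideanSpace ℝ (Fin d)) (μ : Fin d → ℝ) (σ : ℝ), 0 < σ → σ ≤ 1 →
            ∀ ε : ℝ, 0 ≤ ε → ε ≤ 1 →
              ∀ r : ℝ,
                gaussianVec d μ σ
                    {x : Fin d → ℝ | gainFixedCenters s t (toEuc x) a b ∈ Set.Icc r (r + ε)}
                  ≤ ENNReal.ofReal
                      (c * ((n : ℝ) / (d : ℝ) ^ ((1 : ℝ) / 4)) * Real.sqrt (ε / σ ^ 2)) := by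
  obtain ⟨c, hc, small_ball⟩ := gain_fixed_centers_interval_general
  refine ⟨c, hc, fun n d hd s t hs hsn _ _ a b μ σ hσ _ ε hε _ r ↦
    (small_ball d hd s t hs a b μ σ hσ ε hε r).trans (ENNReal.ofReal_le_ofReal ?_)⟩
  have sqrt_le : √(s : ℝ) ≤ n :=
    (Real.sqrt_le_left n.cast_nonneg).mpr
      (by exact_mod_cast hsn.trans (Nat.le_self_pow two_ne_zero n))
  gcongr
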